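/- arXiv:2206.01608 — 7 statements merged into one kernel-verified Lean document; each statement's English description precedes it below -/
import Mathlib

section
/- Let Ã be a real r×r Hurwitz matrix, K a real r×p matrix, and Q a symmetric positive definite real r×r matrix satisfying the Lyapunov equation Ãᵀ Q + Q Ã + K Kᵀ = 0. Define J := (1/2)(Ã Q⁻¹ − Q⁻¹ Ãᵀ) and R := −(1/2)(Ã Q⁻¹ + Q⁻¹ Ãᵀ). Then: (i) J is skew-symmetric; (ii) R = (1/2) Q⁻¹ K Kᵀ Q⁻¹, and in particular R is symmetric positive semidefinite; and (iii) (J − R) Q = Ã. -/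
open Matrix

/-- A real square matrix is Hurwitz if all of its complex eigenvalues
have negative real part. -/
def IsHurwitz {n : ℕ} (A : Matrix (Fin n) (Fin n) ℝ) : Prop :=
  ∀ μ ∈ spectrum ℂ (A.map Complex.ofReal), μ.re < 0

/-- Every Hurwitz matrix `Ã` admits a port-Hamiltonian factorization `Ã = (J − R)Q`
obtained from a symmetric positive definite solution `Q` of the Lyapunov equation
`Ãᵀ Q + Q Ã + K Kᵀ = 0`: the matrix `J := (1/2)(Ã Q⁻¹ − Q⁻¹ Ãᵀ)` is skew-symmetric,
the matrix `R := −(1/2)(Ã Q⁻¹ + Q⁻¹ Ãᵀ)` equals `(1/2) Q⁻¹ K Kᵀ Q⁻¹` and is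
symmetric positive semidefinite, and `(J − R) Q = Ã`. -/
theorem stmt_0 {r p : ℕ} (A : Matrix (Fin r) (Fin r) ℝ) (hA : IsHurwitz A)
    (K : Matrix (Fin r) (Fin p) ℝ) (Q : Matrix (Fin r) (Fin r) ℝ)
    (hQsymm : Qᵀ = Q) (hQpd : Q.PosDef)
    (hLyap : Aᵀ * Q + Q * A + K * Kᵀ = 0)
    (J R : Matrix (Fin r) (Fin r) ℝ)
    (hJ : J = (1 / 2 : ℝ) • (A * Q⁻¹ - Q⁻¹ * Aᵀ))
    (hR : R = -((1 / 2 : ℝ) • (A * Q⁻¹ + Q⁻¹ * Aᵀ))) :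
    Jᵀ = -J ∧
    R = (1 / 2 : ℝ) • (Q⁻¹ * (K * Kᵀ) * Q⁻¹) ∧
    R.PosSemidef ∧
    (J - R) * Q = A := by
  have hu : IsUnit Q.det := (Matrix.isUnit_iff_isUnit_det Q).mp hQpd.isUnit
  have h1 : Q * Q⁻¹ = 1 := Matrix.mul_nonsing_inv Q hu
  have h2 : Q⁻¹ * Q = 1 := Matrix.nonsing_inv_mul Q hu
  have hit : (Q⁻¹)ᵀ = Q⁻¹ := by rw [Matrix.transpose_nonsing_inv, hQsymm]
  have hKK : K * Kᵀ = -(Aᵀ * Q + Q * A) := (neg_eq_of_add_eq_zero_right hLyap).symm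
  have e1 : Q⁻¹ * (Aᵀ * Q) * Q⁻¹ = Q⁻¹ * Aᵀ := by
    rw [Matrix.mul_assoc, Matrix.mul_assoc, h1, Matrix.mul_one]
  have e2 : Q⁻¹ * (Q * A) * Q⁻¹ = A * Q⁻¹ := by
    rw [← Matrix.mul_assoc, h2, Matrix.one_mul]
  have hR2 : R = (1 / 2 : ℝ) • (Q⁻¹ * (K * Kᵀ) * Q⁻¹) := by
    rw [hR, hKK, Matrix.mul_neg, Matrix.neg_mul, Matrix.mul_add, Matrix.add_mul, e1, e2,
      smul_neg, add_comm]
  refine ⟨?_, hR2, ?_, ?_⟩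
  · rw [hJ, Matrix.transpose_smul, Matrix.transpose_sub, Matrix.transpose_mul,
      Matrix.transpose_mul, Matrix.transpose_transpose, hit, ← smul_neg, neg_sub]
  · rw [hR2]
    have h := Matrix.posSemidef_self_mul_conjTranspose (Q⁻¹ * K)
    rw [Matrix.conjTranspose_eq_transpose_of_trivial, Matrix.transpose_mul, hit] at h
    have e : Q⁻¹ * (K * Kᵀ) * Q⁻¹ = Q⁻¹ * K * (Kᵀ * Q⁻¹) := by
      simp only [Matrix.mul_assoc]
    rw [e]
    exact h.smul (by norm_num)
  · have e : J - R = A * Q⁻¹ := by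
      rw [hJ, hR]
      module
    rw [e, Matrix.mul_assoc, h2, Matrix.mul_one]
end

section
/- Let A be a real n×n Hurwitz matrix, B a real n×m matrix, C a real m×n matrix, and D a real m×m matrix, and define the transfer function H(s) := C (sI − A)⁻¹ B + D for complex s not an eigenvalue of A. If for every ω ∈ ℝ the Hermitian matrix H(iω) + H(iω)^H is positive semidefinite, then the symmetric matrix S₀ := (1/2)(Dᵀ + D) is positive semidefinite. Moreover, H(iω) + H(iω)^H converges to 2 S₀ = D + Dᵀ as ω → ∞. -/
open Matrix
open scoped ComplexOrder

/-- For a positive-real transfer function `H(s) = C (sI − A)⁻¹ B + D` with `A` Hurwitz,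
the symmetric part `S₀ := (1/2)(Dᵀ + D)` of the feedthrough is positive semidefinite,
and `H(iω) + H(iω)ᴴ → 2 S₀ = D + Dᵀ` as `ω → ∞`. -/
theorem stmt_3 {n m : ℕ} (A : Matrix (Fin n) (Fin n) ℝ) (hA : IsHurwitz A)
    (B : Matrix (Fin n) (Fin m) ℝ) (C : Matrix (Fin m) (Fin n) ℝ)
    (D : Matrix (Fin m) (Fin m) ℝ)
    (H : ℂ → Matrix (Fin m) (Fin m) ℂ)
    (hH : ∀ s : ℂ, s ∉ spectrum ℂ (A.map Complex.ofReal) →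
      H s = C.map Complex.ofReal *
        (s • (1 : Matrix (Fin n) (Fin n) ℂ) - A.map Complex.ofReal)⁻¹ *
        B.map Complex.ofReal + D.map Complex.ofReal)
    (hPR : ∀ ω : ℝ, (H (Complex.I * (ω : ℂ)) + (H (Complex.I * (ω : ℂ)))ᴴ).PosSemidef) :
    ((1 / 2 : ℝ) • (Dᵀ + D)).PosSemidef ∧
    Filter.Tendsto (fun ω : ℝ => H (Complex.I * (ω : ℂ)) + (H (Complex.I * (ω : ℂ)))ᴴ)
      Filter.atTop (nhds ((2 : ℝ) • ((1 / 2 : ℝ) • (Dᵀ + D)) |>.map Complex.ofReal)) ∧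
    (2 : ℝ) • ((1 / 2 : ℝ) • (Dᵀ + D)) = D + Dᵀ := by
  have hns : ∀ ω : ℝ, Complex.I * (ω : ℂ) ∉ spectrum ℂ (A.map Complex.ofReal) := by
    intro ω hω
    have := hA _ hω
    simp at this
  have hinv : Filter.Tendsto (fun ω : ℝ => (Complex.I * (ω : ℂ))⁻¹) Filter.atTop (nhds 0) := by
    rw [tendsto_zero_iff_norm_tendsto_zero]
    have h := (tendsto_inv_atTop_zero (𝕜 := ℝ)).comp Filter.tendsto_abs_atTop_atTop
    refine h.congr fun ω => ?_
    simp
  have hcont : Filter.Tendsto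
      (fun t : ℂ => t • ((1 : Matrix (Fin n) (Fin n) ℂ) - t • A.map Complex.ofReal)⁻¹)
      (nhds 0) (nhds 0) := by
    have h1 : ContinuousAt (Inv.inv : Matrix (Fin n) (Fin n) ℂ → _)
        ((1 : Matrix (Fin n) (Fin n) ℂ) - (0 : ℂ) • A.map Complex.ofReal) := by
      apply continuousAt_matrix_inv
      simp only [zero_smul, sub_zero, det_one, Ring.inverse_eq_inv']
      exact continuousAt_inv₀ one_ne_zero
    have h2 : Continuous
        (fun t : ℂ => (1 : Matrix (Fin n) (Fin n) ℂ) - t • A.map Complex.ofReal) := by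
      fun_prop
    have h3 := (Filter.tendsto_id (x := nhds (0 : ℂ))).smul (h1.tendsto.comp (h2.tendsto 0))
    rw [zero_smul ℂ] at h3
    exact h3
  have hres : Filter.Tendsto (fun ω : ℝ => ((Complex.I * (ω : ℂ)) •
      (1 : Matrix (Fin n) (Fin n) ℂ) - A.map Complex.ofReal)⁻¹) Filter.atTop (nhds 0) := by
    refine (hcont.comp hinv).congr' ?_
    filter_upwards [Filter.eventually_gt_atTop (0 : ℝ)] with ω hω
    have hs : Complex.I * (ω : ℂ) ≠ 0 := by simp [hω.ne']
    have hu := hns ω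
    rw [spectrum.notMem_iff, Algebra.algebraMap_eq_smul_one, Matrix.isUnit_iff_isUnit_det] at hu
    simp only [Function.comp]
    generalize Complex.I * (ω : ℂ) = s at hs hu ⊢
    have e : s • (1 : Matrix (Fin n) (Fin n) ℂ) - A.map Complex.ofReal
        = s • (1 - s⁻¹ • A.map Complex.ofReal) := by
      rw [smul_sub, smul_smul, mul_inv_cancel₀ hs, one_smul]
    have hu2 : IsUnit (1 - s⁻¹ • A.map Complex.ofReal).det := by
      rw [e, det_smul] at hu
      exact isUnit_of_mul_isUnit_right hu
    symm
    apply Matrix.inv_eq_right_inv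
    rw [e, smul_mul_smul_comm, mul_inv_cancel₀ hs, one_smul, Matrix.mul_nonsing_inv _ hu2]
  have hHt : Filter.Tendsto (fun ω : ℝ => H (Complex.I * (ω : ℂ))) Filter.atTop
      (nhds (D.map Complex.ofReal)) := by
    have hc : Continuous (fun X : Matrix (Fin n) (Fin n) ℂ =>
      C.map Complex.ofReal * X * B.map Complex.ofReal + D.map Complex.ofReal) := by fun_prop
    have h := (hc.tendsto 0).comp hres
    simp only [Matrix.mul_zero, Matrix.zero_mul, zero_add] at h
    exact h.congr fun ω => (hH _ (hns ω)).symm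
  have h2 : (2 : ℝ) • ((1 / 2 : ℝ) • (Dᵀ + D)) = D + Dᵀ := by
    rw [smul_smul, add_comm]; norm_num
  have hlim : Filter.Tendsto
      (fun ω : ℝ => H (Complex.I * (ω : ℂ)) + (H (Complex.I * (ω : ℂ)))ᴴ)
      Filter.atTop (nhds ((D + Dᵀ).map Complex.ofReal)) := by
    have hc : Continuous (fun X : Matrix (Fin m) (Fin m) ℂ => X + Xᴴ) := by fun_prop
    have h := (hc.tendsto _).comp hHt
    have e : D.map Complex.ofReal + (D.map Complex.ofReal)ᴴ = (D + Dᵀ).map Complex.ofReal := by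
      ext i j; simp
    rw [e] at h
    exact h
  refine ⟨?_, by rw [h2]; exact hlim, h2⟩
  have hD : (D + Dᵀ).PosSemidef := by
    refine Matrix.PosSemidef.of_dotProduct_mulVec_nonneg ?_ fun x => ?_
    · ext i j; simp [add_comm]
    · have hc : Continuous (fun X : Matrix (Fin m) (Fin m) ℂ =>
        (star (fun i => (x i : ℂ)) ⬝ᵥ (X *ᵥ (fun i => (x i : ℂ)))).re) := by fun_prop
      have h := (hc.tendsto _).comp hlim
      have h0 := ge_of_tendsto' h (b := 0) fun ω =>
        (Complex.le_def.1 ((hPR ω).dotProduct_mulVec_nonneg (fun i => (x i : ℂ)))).1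
      simpa [dotProduct, mulVec] using h0
  rw [add_comm Dᵀ D]
  exact hD.smul (by norm_num)
end

section
/- Let A be a real n×n Hurwitz matrix, B a real n×m matrix, C a real m×n matrix, and G(s) := C (sI − A)⁻¹ B. Let λ₁, …, λ_r be distinct complex numbers with Re λ_i < 0, and l_i, r_i ∈ ℂ^m, closed under complex conjugation via a permutation σ with λ_{σ(i)} = conj(λ_i), l_{σ(i)} = conj(l_i), r_{σ(i)} = conj(r_i). Define H_r(s) := Σ_{i=1}^r l_i r_iᵀ / (s − λ_i). Then the H2 inner product satisfies (1/2π) ∫_ℝ trace( G(iω) · H_r(iω)^H ) dω = Σ_{i=1}^r l_iᵀ G(−λ_i) r_i, and this quantity is real. -/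
open Matrix MeasureTheory

section aux
open Filter Topology Complex

lemma aux_bound {𝔸 : Type*} [NormedRing 𝔸] [NormedAlgebra ℂ 𝔸] [CompleteSpace 𝔸] (a : 𝔸)
    (ha : ∀ μ ∈ spectrum ℂ a, μ.re < 0) :
    ∃ K : ℝ, 0 ≤ K ∧ ∀ s : ℂ, 0 ≤ s.re → ‖resolvent a s‖ * (1 + ‖s‖) ≤ K := by
  obtain ⟨c, hc, hO⟩ := (spectrum.resolvent_isBigO_inv (𝕜 := ℂ) a).exists_pos
  rw [Asymptotics.IsBigOWith, ← comap_norm_atTop, eventually_comap] at hO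
  obtain ⟨T, hT⟩ := eventually_atTop.1 hO
  have hcomp : IsCompact (Metric.closedBall (0 : ℂ) (max T 1) ∩ {s : ℂ | 0 ≤ s.re}) :=
    (isCompact_closedBall _ _).inter_right (isClosed_le continuous_const continuous_re)
  have hcont : ContinuousOn (fun s : ℂ => ‖resolvent a s‖ * (1 + ‖s‖))
      (Metric.closedBall (0 : ℂ) (max T 1) ∩ {s : ℂ | 0 ≤ s.re}) := by
    intro s hs
    have hres : s ∈ resolventSet ℂ a := by
      by_contra h
      exact absurd (ha s h) (not_lt.2 hs.2)
    have := (spectrum.hasDerivAt_resolvent_const_left hres).continuousAt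
    exact (this.norm.mul (by fun_prop)).continuousWithinAt
  obtain ⟨M, hM⟩ := hcomp.exists_bound_of_continuousOn hcont
  refine ⟨max M (2 * c), le_max_of_le_right (by positivity), fun s hs => ?_⟩
  by_cases h : ‖s‖ ≤ max T 1
  · exact le_max_of_le_left ((le_abs_self _).trans (hM s ⟨by simpa using h, hs⟩))
  · push Not at h
    have h1 : 1 < ‖s‖ := lt_of_le_of_lt (le_max_right _ _) h
    have h2 := hT ‖s‖ ((le_max_left _ _).trans h.le) s rfl
    apply le_max_of_le_right
    rw [norm_inv] at h2
    calc ‖resolvent a s‖ * (1 + ‖s‖) ≤ (c * ‖s‖⁻¹) * (‖s‖ + ‖s‖) := by gcongr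
      _ = 2 * c := by field_simp; ring

lemma aux_cauchy {E : Type*} [NormedAddCommGroup E] [NormedSpace ℂ E] [CompleteSpace E]
    (f : ℂ → E) (hf : ∀ s : ℂ, 0 ≤ s.re → DifferentiableAt ℂ f s) (K : ℝ)
    (hK : ∀ s : ℂ, 0 ≤ s.re → ‖f s‖ * (1 + ‖s‖) ^ 2 ≤ K) :
    Integrable (fun ω : ℝ => f (I * ω)) ∧ ∫ ω : ℝ, f (I * ω) = 0 := by
  have hK0 : 0 ≤ K := le_trans (by positivity) (hK 0 (by simp))
  have hcont : Continuous (fun ω : ℝ => f (I * ω)) := by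
    rw [continuous_iff_continuousAt]
    intro ω
    exact ContinuousAt.comp (f := fun ω : ℝ => I * (ω : ℂ)) (hf (I * ω) (by simp)).continuousAt
      (by fun_prop)
  have hint : Integrable (fun ω : ℝ => f (I * ω)) := by
    refine (integrable_inv_one_add_sq.const_mul K).mono' hcont.aestronglyMeasurable
      (Eventually.of_forall fun ω => ?_)
    have h := hK (I * ω) (by simp)
    have h1 : 1 + ω ^ 2 ≤ (1 + ‖I * (ω : ℂ)‖) ^ 2 := by
      simp only [norm_mul, norm_I, one_mul, norm_real, Real.norm_eq_abs]
      nlinarith [abs_nonneg ω, sq_abs ω]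
    rw [← div_eq_mul_inv, le_div_iff₀ (by positivity)]
    exact (mul_le_mul_of_nonneg_left h1 (norm_nonneg _)).trans h
  refine ⟨hint, ?_⟩
  have hlim := intervalIntegral_tendsto_integral hint tendsto_neg_atTop_atBot tendsto_id
  refine tendsto_nhds_unique hlim ?_
  have hz : Tendsto (fun T : ℝ => 4 * K / T) atTop (𝓝 0) := tendsto_const_nhds.div_atTop tendsto_id
  refine squeeze_zero_norm' ?_ hz
  filter_upwards [eventually_gt_atTop 0] with T hT
  have hb : ∀ s : ℂ, 0 ≤ s.re → T ≤ ‖s‖ → ‖f s‖ ≤ K / T ^ 2 := by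
    intro s hs hTs
    rw [le_div_iff₀ (by positivity)]
    refine le_trans (mul_le_mul_of_nonneg_left ?_ (norm_nonneg _)) (hK s hs)
    gcongr
    linarith
  have hrect := integral_boundary_rect_eq_zero_of_differentiableOn f (-(T * I)) (T + T * I) (by
    intro s hs
    refine (hf s ?_).differentiableWithinAt
    have := hs.1
    simp [Set.uIcc_of_le hT.le] at this
    exact this.1)
  simp at hrect
  have e1 : ‖∫ x in (0:ℝ)..T, f (x + -(T * I))‖ ≤ K / T ^ 2 * |T - 0| := by
    apply intervalIntegral.norm_integral_le_of_norm_le_const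
    intro x hx
    rw [Set.uIoc_of_le hT.le] at hx
    refine hb _ (by simpa using hx.1.le) (le_trans ?_ (abs_im_le_norm _))
    simp [abs_of_pos hT]
  have e2 : ‖∫ x in (0:ℝ)..T, f (x + T * I)‖ ≤ K / T ^ 2 * |T - 0| := by
    apply intervalIntegral.norm_integral_le_of_norm_le_const
    intro x hx
    rw [Set.uIoc_of_le hT.le] at hx
    refine hb _ (by simpa using hx.1.le) (le_trans ?_ (abs_im_le_norm _))
    simp [abs_of_pos hT]
  have e3 : ‖∫ y in (-T)..T, f (T + y * I)‖ ≤ K / T ^ 2 * |T - -T| := by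
    apply intervalIntegral.norm_integral_le_of_norm_le_const
    intro x hx
    refine hb _ (by simpa using hT.le) (le_trans ?_ (abs_re_le_norm _))
    simp [abs_of_pos hT]
  have e4 : (∫ y in (-T)..T, f (I * y)) = ∫ y in (-T)..T, f (y * I) := by simp_rw [mul_comm I]
  change ‖∫ y in (-T)..T, f (I * y)‖ ≤ _
  rw [sub_eq_zero] at hrect
  have e5 : ‖∫ y in (-T)..T, f (I * y)‖ = ‖I • ∫ y in (-T)..T, f (y * I)‖ := by
    rw [e4, norm_smul, norm_I, one_mul]
  rw [e5, ← hrect]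
  refine (norm_add_le _ _).trans ((add_le_add_left (norm_sub_le _ _) _).trans ?_)
  rw [norm_smul, norm_I, one_mul]
  rw [sub_zero, abs_of_pos hT] at e1 e2
  rw [sub_neg_eq_add, abs_of_pos (by positivity : 0 < T + T)] at e3
  calc _ ≤ K / T ^ 2 * T + K / T ^ 2 * T + K / T ^ 2 * (T + T) := by gcongr
    _ = 4 * K / T := by field_simp; ring

lemma aux_scalar (μ : ℂ) (hμ : 0 < μ.re) :
    Integrable (fun ω : ℝ => (μ + starRingEnd ℂ μ) / ((I * ω + starRingEnd ℂ μ) * (μ - I * ω))) ∧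
    ∫ ω : ℝ, (μ + starRingEnd ℂ μ) / ((I * ω + starRingEnd ℂ μ) * (μ - I * ω)) = 2 * Real.pi := by
  have key : (fun ω : ℝ => (μ + starRingEnd ℂ μ) / ((I * ω + starRingEnd ℂ μ) * (μ - I * ω))) =
      fun ω : ℝ => (((2 * μ.re⁻¹) * (1 + (μ.re⁻¹ * (ω - μ.im)) ^ 2)⁻¹ : ℝ) : ℂ) := by
    ext ω
    have h1 : (I * ω + starRingEnd ℂ μ) * (μ - I * ω) = ((μ.re ^ 2 + (ω - μ.im) ^ 2 : ℝ) : ℂ) := by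
      apply Complex.ext <;> simp [← ofReal_pow, ← ofReal_sub] <;> ring
    have h2 : μ + starRingEnd ℂ μ = ((2 * μ.re : ℝ) : ℂ) := by
      apply Complex.ext <;> simp; ring
    rw [h1, h2, ← ofReal_div]
    congr 1
    have : 0 < μ.re ^ 2 + (ω - μ.im) ^ 2 := by positivity
    field_simp
  rw [key]
  have hi : Integrable (fun x : ℝ => (1 + (μ.re⁻¹ * x) ^ 2)⁻¹) :=
    integrable_inv_one_add_sq.comp_mul_left' (inv_ne_zero hμ.ne')
  refine ⟨((hi.comp_sub_right μ.im).const_mul _).ofReal, ?_⟩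
  rw [integral_complex_ofReal, integral_const_mul,
    integral_sub_right_eq_self (fun x : ℝ => (1 + (μ.re⁻¹ * x) ^ 2)⁻¹) μ.im,
    Measure.integral_comp_mul_left (fun x : ℝ => (1 + x ^ 2)⁻¹), integral_univ_inv_one_add_sq]
  rw [inv_inv, abs_of_pos hμ, smul_eq_mul]
  norm_cast
  field_simp

lemma aux_main {𝔸 : Type*} [NormedRing 𝔸] [NormedAlgebra ℂ 𝔸] [CompleteSpace 𝔸] (a : 𝔸)
    (ha : ∀ μ ∈ spectrum ℂ a, μ.re < 0) (μ : ℂ) (hμ : 0 < μ.re) :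
    Integrable (fun ω : ℝ => (μ - I * ω)⁻¹ • resolvent a (I * ω : ℂ)) ∧
    ∫ ω : ℝ, (μ - I * ω)⁻¹ • resolvent a (I * ω : ℂ) = (2 * Real.pi : ℂ) • resolvent a μ := by
  obtain ⟨K, hK0, hK⟩ := aux_bound a ha
  set ν := starRingEnd ℂ μ with hν
  have hνre : ν.re = μ.re := by simp [hν]
  have hres : ∀ s : ℂ, 0 ≤ s.re → s ∈ resolventSet ℂ a := by
    intro s hs
    by_contra h
    exact absurd (ha s h) (not_lt.2 hs)
  have hne : ∀ s : ℂ, 0 ≤ s.re → s + ν ≠ 0 := by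
    intro s hs h
    have := congrArg Complex.re h
    simp [hνre] at this
    linarith
  have hinv : ∀ s : ℂ, 0 ≤ s.re → resolvent a s * (algebraMap ℂ 𝔸 s - a) = 1 := fun s hs =>
    Ring.inverse_mul_cancel _ (hres s hs)
  have hinv' : ∀ s : ℂ, 0 ≤ s.re → (algebraMap ℂ 𝔸 s - a) * resolvent a s = 1 := fun s hs =>
    Ring.mul_inverse_cancel _ (hres s hs)
  have hfeq : ∀ s : ℂ, 0 ≤ s.re → resolvent a s - (s + ν)⁻¹ • (1 : 𝔸) =
      (s + ν)⁻¹ • (resolvent a s * (algebraMap ℂ 𝔸 ν + a)) := by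
    intro s hs
    have h1 : algebraMap ℂ 𝔸 ν + a = algebraMap ℂ 𝔸 (s + ν) - (algebraMap ℂ 𝔸 s - a) := by
      rw [map_add]; abel
    rw [h1, mul_sub, hinv s hs, ← Algebra.commutes, ← Algebra.smul_def, smul_sub,
      inv_smul_smul₀ (hne s hs)]
  obtain ⟨fi, f0⟩ := aux_cauchy (fun s => resolvent a s - (s + ν)⁻¹ • (1 : 𝔸)) (by
      intro s hs
      refine (spectrum.hasDerivAt_resolvent_const_left (hres s hs)).differentiableAt.sub ?_
      exact ((differentiableAt_id.add_const ν).inv (hne s hs)).smul_const _)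
    ((1 + (1 + ‖ν‖) / μ.re) * (K * ‖algebraMap ℂ 𝔸 ν + a‖)) (by
      intro s hs
      rw [hfeq s hs, norm_smul, norm_inv]
      have h1 : (1 + ‖s‖) ≤ ‖s + ν‖ * (1 + (1 + ‖ν‖) / μ.re) := by
        have h2 : μ.re ≤ ‖s + ν‖ := by
          refine le_trans ?_ (re_le_norm _)
          simp [hνre, hs]
        have h3 : ‖s‖ ≤ ‖s + ν‖ + ‖ν‖ := by simpa using norm_sub_le (s + ν) ν
        have h4 : (1 + ‖ν‖) ≤ ‖s + ν‖ * ((1 + ‖ν‖) / μ.re) := by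
          rw [mul_div_assoc', le_div_iff₀ hμ, mul_comm]
          gcongr
        linarith
      have h5 : ‖s + ν‖⁻¹ * (1 + ‖s‖) ≤ 1 + (1 + ‖ν‖) / μ.re := by
        rw [inv_mul_le_iff₀ (norm_pos_iff.2 (hne s hs))]
        exact h1
      calc _ ≤ ‖s + ν‖⁻¹ * (‖resolvent a s‖ * ‖algebraMap ℂ 𝔸 ν + a‖) * (1 + ‖s‖) ^ 2 := by
            gcongr; exact norm_mul_le _ _
        _ = (‖s + ν‖⁻¹ * (1 + ‖s‖)) * ((‖resolvent a s‖ * (1 + ‖s‖)) * ‖algebraMap ℂ 𝔸 ν + a‖) := by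
            ring
        _ ≤ _ := by
            gcongr
            exact hK s hs)
  obtain ⟨si, s0⟩ := aux_scalar μ hμ
  rw [← hν] at si s0
  have key : (fun ω : ℝ => (μ - I * ω)⁻¹ • resolvent a (I * ω : ℂ)) = fun ω : ℝ =>
      resolvent a μ * (resolvent a (I * ω : ℂ) - (I * ω + ν)⁻¹ • (1 : 𝔸)) +
      ((μ + ν) / ((I * ω + ν) * (μ - I * ω))) • resolvent a μ := by
    ext ω
    have hs : 0 ≤ (I * (ω : ℂ)).re := by simp
    have hd : μ - I * (ω : ℂ) ≠ 0 := by
      intro h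
      have := congrArg Complex.re h
      simp at this
      linarith
    generalize I * (ω : ℂ) = s at hs hd
    have he := hne s hs
    have h1 : resolvent a s - resolvent a μ = (μ - s) • (resolvent a μ * resolvent a s) := by
      have h2 : (μ - s) • (resolvent a μ * resolvent a s) = resolvent a μ *
          ((algebraMap ℂ 𝔸 μ - a) - (algebraMap ℂ 𝔸 s - a)) * resolvent a s := by
        rw [sub_sub_sub_cancel_right, ← map_sub, ← Algebra.commutes, ← Algebra.smul_def,
          smul_mul_assoc]
      rw [h2, mul_sub, hinv μ hμ.le, sub_mul, one_mul, mul_assoc, hinv' s hs, mul_one]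
    have h3 : resolvent a s = resolvent a μ + (μ - s) • (resolvent a μ * resolvent a s) := by
      rw [← h1]; abel
    have h4 : (μ + ν) / ((s + ν) * (μ - s)) = (s + ν)⁻¹ + (μ - s)⁻¹ := by
      field_simp; ring
    rw [h4, add_smul, mul_sub, mul_smul_comm, mul_one]
    nth_rewrite 1 [h3]
    rw [smul_add, inv_smul_smul₀ hd]
    abel
  rw [key]
  refine ⟨(fi.const_mul _).add (si.smul_const _), ?_⟩
  rw [integral_add (fi.const_mul _) (si.smul_const _), integral_const_mul_of_integrable fi,
    integral_smul_const, f0, s0, mul_zero, zero_add]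
end aux

section fin
open Complex
open scoped Matrix.Norms.Operator

noncomputable def auxPhi {n m : ℕ} (B : Matrix (Fin n) (Fin m) ℂ) (C : Matrix (Fin m) (Fin n) ℂ)
    (l ρ : Fin m → ℂ) : Matrix (Fin n) (Fin n) ℂ →ₗ[ℂ] ℂ where
  toFun M := l ⬝ᵥ ((C * M * B) *ᵥ ρ)
  map_add' M N := by simp [Matrix.mul_add, Matrix.add_mul, Matrix.add_mulVec]
  map_smul' c M := by simp [Matrix.smul_mulVec]

lemma aux_phi_int {n m : ℕ} (A : Matrix (Fin n) (Fin n) ℂ)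
    (hA : ∀ μ ∈ spectrum ℂ A, μ.re < 0)
    (B : Matrix (Fin n) (Fin m) ℂ) (C : Matrix (Fin m) (Fin n) ℂ)
    (l ρ : Fin m → ℂ) (μ : ℂ) (hμ : 0 < μ.re) :
    Integrable (fun ω : ℝ => (μ - I * ω)⁻¹ * auxPhi B C l ρ (resolvent A (I * ω : ℂ))) ∧
    ∫ ω : ℝ, (μ - I * ω)⁻¹ * auxPhi B C l ρ (resolvent A (I * ω : ℂ)) =
      (2 * Real.pi : ℂ) * auxPhi B C l ρ (resolvent A μ) := by
  have : CompleteSpace (Matrix (Fin n) (Fin n) ℂ) := FiniteDimensional.complete ℂ _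
  obtain ⟨h1, h2⟩ := aux_main A hA μ hμ
  let φ := LinearMap.toContinuousLinearMap (auxPhi B C l ρ)
  have e : (fun ω : ℝ => (μ - I * ω)⁻¹ * auxPhi B C l ρ (resolvent A (I * ω : ℂ))) =
      fun ω : ℝ => φ ((μ - I * ω)⁻¹ • resolvent A (I * ω : ℂ)) := by
    ext ω
    simp [φ]
  rw [e]
  refine ⟨φ.integrable_comp h1, ?_⟩
  refine (φ.integral_comp_comm h1).trans ?_
  refine (congrArg φ h2).trans ?_
  simp [φ]
end fin

/-- Pole–residue evaluation of the H2 inner product: for `G(s) = C (sI − A)⁻¹ B`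
with `A` Hurwitz and `H_r(s) = Σᵢ lᵢ rᵢᵀ/(s − λᵢ)` with distinct stable poles and
residue data closed under complex conjugation,
`(1/2π) ∫_ℝ trace(G(iω) H_r(iω)ᴴ) dω = Σᵢ lᵢᵀ G(−λᵢ) rᵢ`, and this quantity is real. -/
theorem stmt_6 {n m r : ℕ} (A : Matrix (Fin n) (Fin n) ℝ) (hA : IsHurwitz A)
    (B : Matrix (Fin n) (Fin m) ℝ) (C : Matrix (Fin m) (Fin n) ℝ)
    (G : ℂ → Matrix (Fin m) (Fin m) ℂ)
    (hG : ∀ s : ℂ, s ∉ spectrum ℂ (A.map Complex.ofReal) →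
      G s = C.map Complex.ofReal *
        (s • (1 : Matrix (Fin n) (Fin n) ℂ) - A.map Complex.ofReal)⁻¹ *
        B.map Complex.ofReal)
    (lam : Fin r → ℂ)
    (hdist : Function.Injective lam)
    (hstab : ∀ i, (lam i).re < 0)
    (l ρ : Fin r → (Fin m → ℂ))
    (σ : Equiv.Perm (Fin r))
    (hσlam : ∀ i, lam (σ i) = starRingEnd ℂ (lam i))
    (hσl : ∀ i, l (σ i) = star (l i))
    (hσρ : ∀ i, ρ (σ i) = star (ρ i))
    (Hr : ℂ → Matrix (Fin m) (Fin m) ℂ)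
    (hHr : ∀ s : ℂ, Hr s = ∑ i : Fin r, (s - lam i)⁻¹ • Matrix.vecMulVec (l i) (ρ i)) :
    Integrable (fun ω : ℝ =>
      (G (Complex.I * (ω : ℂ)) * (Hr (Complex.I * (ω : ℂ)))ᴴ).trace) volume ∧
    ((1 / (2 * Real.pi) : ℝ) : ℂ) *
        (∫ ω : ℝ, (G (Complex.I * (ω : ℂ)) * (Hr (Complex.I * (ω : ℂ)))ᴴ).trace) =
      ∑ i : Fin r, l i ⬝ᵥ (G (-(lam i)) *ᵥ ρ i) ∧
    (∑ i : Fin r, l i ⬝ᵥ (G (-(lam i)) *ᵥ ρ i)).im = 0 := by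
  set A' := A.map Complex.ofReal with hA'
  set B' := B.map Complex.ofReal with hB'
  set C' := C.map Complex.ofReal with hC'
  have hns : ∀ s : ℂ, 0 ≤ s.re → s ∉ spectrum ℂ A' := fun s hs h =>
    absurd (hA s h) (not_lt.2 hs)
  have hGφ : ∀ (s : ℂ) (u v : Fin m → ℂ), 0 ≤ s.re →
      u ⬝ᵥ (G s *ᵥ v) = auxPhi B' C' u v (resolvent A' s) := by
    intro s u v hs
    rw [hG s (hns s hs)]
    simp only [auxPhi, resolvent, LinearMap.coe_mk, AddHom.coe_mk]
    rw [Matrix.nonsing_inv_eq_ringInverse, Algebra.algebraMap_eq_smul_one]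
  have key : (fun ω : ℝ => (G (Complex.I * (ω : ℂ)) * (Hr (Complex.I * (ω : ℂ)))ᴴ).trace) =
      fun ω : ℝ => ∑ i, (-(lam i) - Complex.I * ω)⁻¹ *
        auxPhi B' C' (l i) (ρ i) (resolvent A' (Complex.I * ω : ℂ)) := by
    ext ω
    rw [hHr, Matrix.conjTranspose_sum, Finset.mul_sum, Matrix.trace_sum,
      ← Equiv.sum_comp σ (fun i => (-(lam i) - Complex.I * ω)⁻¹ *
        auxPhi B' C' (l i) (ρ i) (resolvent A' (Complex.I * ω : ℂ)))]
    refine Finset.sum_congr rfl fun i _ => ?_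
    rw [← hGφ _ _ _ (by simp), hσlam, hσl, hσρ, Matrix.conjTranspose_smul,
      Matrix.conjTranspose_vecMulVec, Matrix.mul_smul, Matrix.trace_smul, Matrix.mul_vecMulVec,
      Matrix.trace_vecMulVec, dotProduct_comm, smul_eq_mul]
    congr 1
    simp
    ring
  have hpos : ∀ i, 0 < (-(lam i)).re := fun i => by simpa using hstab i
  have hI := fun i => aux_phi_int A' hA B' C' (l i) (ρ i) (-(lam i)) (hpos i)
  refine ⟨?_, ?_, ?_⟩
  · rw [key]
    exact integrable_finsetSum _ fun i _ => (hI i).1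
  · rw [key, integral_finsetSum _ fun i _ => (hI i).1, Finset.mul_sum]
    refine Finset.sum_congr rfl fun i _ => ?_
    rw [(hI i).2, hGφ _ _ _ (hpos i).le, ← mul_assoc]
    have : (Real.pi : ℂ) ≠ 0 := by exact_mod_cast Real.pi_ne_zero
    push_cast
    field_simp
  · rw [← Complex.conj_eq_iff_im, map_sum,
      ← Equiv.sum_comp σ (fun i => l i ⬝ᵥ (G (-(lam i)) *ᵥ ρ i))]
    refine Finset.sum_congr rfl fun i _ => ?_
    have hconj : G (-(starRingEnd ℂ (lam i))) = (G (-(lam i))).map (starRingEnd ℂ) := by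
      rw [hG _ (hns _ (by simpa using (hstab i).le)), hG _ (hns _ (hpos i).le),
        Matrix.map_mul, Matrix.map_mul]
      have hr : ∀ (p q : ℕ) (M : Matrix (Fin p) (Fin q) ℝ),
          (M.map Complex.ofReal).map (starRingEnd ℂ) = M.map Complex.ofReal := by
        intro p q M; ext a b; simp
      rw [hB', hC', hr, hr]
      congr 2
      have hm : ∀ M : Matrix (Fin n) (Fin n) ℂ,
          (M⁻¹).map (starRingEnd ℂ) = (M.map (starRingEnd ℂ))⁻¹ := by
        intro M
        have := Matrix.conjTranspose_nonsing_inv M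
        have h2 := congrArg Matrix.transpose this
        rw [Matrix.transpose_nonsing_inv] at h2
        exact h2
      rw [hm]
      congr 1
      ext a b
      simp [Matrix.one_apply, hA', apply_ite]
    rw [hσlam, hσl, hσρ, hconj]
    simp only [dotProduct, Matrix.mulVec, map_sum, map_mul, Matrix.map_apply, Pi.star_apply,
      RCLike.star_def]
end

section
/- Let Ã be a real r×r Hurwitz matrix, let K : ℝ → ℝ^{r×p} be differentiable at a point t₀ with derivative K'(t₀), and let Q : ℝ → ℝ^{r×r} be the function assigning to each t the unique solution Q(t) of the Lyapunov equation Ãᵀ Q(t) + Q(t) Ã + K(t) K(t)ᵀ = 0. Then Q is differentiable at t₀ and its derivative Q'(t₀) is the unique solution of the Lyapunov equation Ãᵀ Q'(t₀) + Q'(t₀) Ã + K'(t₀) K(t₀)ᵀ + K(t₀) K'(t₀)ᵀ = 0. -/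
open Matrix

attribute [local instance] Matrix.normedAddCommGroup Matrix.normedSpace

lemma lyap_inj {r : ℕ} (A : Matrix (Fin r) (Fin r) ℝ) (hA : IsHurwitz A)
    (X : Matrix (Fin r) (Fin r) ℝ) (hX : Aᵀ * X + X * A = 0) : X = 0 := by
  rcases Nat.eq_zero_or_pos r with h0 | hr
  · subst h0; exact Subsingleton.elim _ _
  have : Nonempty (Fin r) := ⟨⟨0, hr⟩⟩
  set B : Matrix (Fin r) (Fin r) ℂ := A.map Complex.ofReal with hB
  set Y : Matrix (Fin r) (Fin r) ℂ := X.map Complex.ofReal with hY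
  have hXY : Bᵀ * Y = Y * (-B) := by
    have h1 : (Aᵀ * X + X * A).map (Complex.ofRealHom) = 0 := by rw [hX]; simp
    rw [Matrix.map_add _ (map_add _), Matrix.map_mul, Matrix.map_mul] at h1
    have h2 : Bᵀ * Y + Y * B = 0 := h1
    rw [mul_neg]; exact eq_neg_of_add_eq_zero_left h2
  have hp : ∀ q : Polynomial ℂ, Polynomial.aeval Bᵀ q * Y = Y * Polynomial.aeval (-B) q := by
    intro q
    induction q using Polynomial.induction_on' with
    | add p q hp hq => simp only [map_add, add_mul, mul_add, hp, hq]
    | monomial n a =>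
      have hn : Bᵀ ^ n * Y = Y * (-B) ^ n := by
        induction n with
        | zero => simp
        | succ k ih => rw [pow_succ, mul_assoc, hXY, ← mul_assoc, ih, mul_assoc, ← pow_succ]
      rw [Polynomial.aeval_monomial, Polynomial.aeval_monomial, mul_assoc, hn,
        ← mul_assoc, Algebra.commutes, mul_assoc, Algebra.commutes a ((-B)^n)]
  have h := hp Bᵀ.charpoly
  rw [Matrix.aeval_self_charpoly, zero_mul, Matrix.charpoly_transpose] at h
  have hu : IsUnit (Polynomial.aeval (-B) B.charpoly) := by
    by_contra hn
    have h0 : (0 : ℂ) ∈ spectrum ℂ (Polynomial.aeval (-B) B.charpoly) := by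
      rwa [spectrum.zero_mem_iff]
    rw [spectrum.map_polynomial_aeval_of_degree_pos _ _ (by
      rw [Matrix.charpoly_degree_eq_dim]; simpa using hr)] at h0
    obtain ⟨μ, hμ, hr0⟩ := h0
    have h1 := hA μ (Matrix.mem_spectrum_of_isRoot_charpoly hr0)
    have h2 := hA (-μ) (by rwa [← spectrum.neg_eq, Set.mem_neg] at hμ)
    simp at h2; linarith
  have hY0 : Y = 0 := (hu.mul_left_eq_zero).1 h.symm
  ext i j
  have := congrFun (congrFun hY0 i) j
  simpa [hY] using this

lemma hasDeriv_mulT {r p : ℕ} (K : ℝ → Matrix (Fin r) (Fin p) ℝ) (K' : Matrix (Fin r) (Fin p) ℝ)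
    (t₀ : ℝ) (hK : HasDerivAt K K' t₀) :
    HasDerivAt (fun t => K t * (K t)ᵀ) (K' * (K t₀)ᵀ + K t₀ * K'ᵀ) t₀ := by
  have he : ∀ i j, HasDerivAt (fun t => K t i j) (K' i j) t₀ := fun i j =>
    hasDerivAt_pi.1 (hasDerivAt_pi.1 hK i) j
  refine hasDerivAt_pi.2 fun i => hasDerivAt_pi.2 fun j => ?_
  simp only [Matrix.mul_apply, Matrix.transpose_apply, Matrix.add_apply, ← Finset.sum_add_distrib]
  exact HasDerivAt.fun_sum fun k _ => (he i k).mul (he j k)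

/-- Differentiability of the Lyapunov solution: if `Ã` is Hurwitz, `K : ℝ → ℝ^{r×p}`
is differentiable at `t₀` with derivative `K'`, and `Q t` solves
`Ãᵀ Q(t) + Q(t) Ã + K(t) K(t)ᵀ = 0` for every `t`, then `Q` is differentiable at `t₀`
and its derivative is the unique solution `Q'` of
`Ãᵀ Q' + Q' Ã + K' K(t₀)ᵀ + K(t₀) K'ᵀ = 0`. -/
theorem stmt_10 {r p : ℕ} (A : Matrix (Fin r) (Fin r) ℝ) (hA : IsHurwitz A)
    (K : ℝ → Matrix (Fin r) (Fin p) ℝ) (K' : Matrix (Fin r) (Fin p) ℝ) (t₀ : ℝ)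
    (hK : HasDerivAt K K' t₀)
    (Q : ℝ → Matrix (Fin r) (Fin r) ℝ)
    (hQ : ∀ t : ℝ, Aᵀ * Q t + Q t * A + K t * (K t)ᵀ = 0) :
    ∃ Q' : Matrix (Fin r) (Fin r) ℝ,
      HasDerivAt Q Q' t₀ ∧
      Aᵀ * Q' + Q' * A + K' * (K t₀)ᵀ + K t₀ * K'ᵀ = 0 ∧
      ∀ P : Matrix (Fin r) (Fin r) ℝ,
        Aᵀ * P + P * A + K' * (K t₀)ᵀ + K t₀ * K'ᵀ = 0 → P = Q' := by
  let L : Matrix (Fin r) (Fin r) ℝ →ₗ[ℝ] Matrix (Fin r) (Fin r) ℝ :=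
    LinearMap.mulLeft ℝ Aᵀ + LinearMap.mulRight ℝ A
  have hL : ∀ X, L X = Aᵀ * X + X * A := fun X => rfl
  have hinj : Function.Injective L := by
    rw [injective_iff_map_eq_zero]
    intro X hX
    exact lyap_inj A hA X hX
  let e := LinearEquiv.ofInjectiveEndo L hinj
  have he : ∀ X, e X = L X := fun X => rfl
  let S : Matrix (Fin r) (Fin r) ℝ →L[ℝ] Matrix (Fin r) (Fin r) ℝ :=
    LinearMap.toContinuousLinearMap e.symm.toLinearMap
  have hS : ∀ X, S X = e.symm X := fun X => rfl
  have hQe : Q = fun t => S (-(K t * (K t)ᵀ)) := by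
    funext t
    rw [hS, LinearEquiv.eq_symm_apply, he, hL]
    exact eq_neg_of_add_eq_zero_left (hQ t)
  refine ⟨S (-(K' * (K t₀)ᵀ + K t₀ * K'ᵀ)), ?_, ?_, ?_⟩
  · rw [hQe]
    exact S.hasFDerivAt.comp_hasDerivAt t₀ (hasDeriv_mulT K K' t₀ hK).neg
  · have h : e (S (-(K' * (K t₀)ᵀ + K t₀ * K'ᵀ))) = _ := e.apply_symm_apply _
    rw [he, hL] at h
    rw [add_assoc, h, neg_add_cancel]
  · intro P hP
    rw [hS, LinearEquiv.eq_symm_apply, he, hL]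
    rw [add_assoc] at hP
    exact eq_neg_of_add_eq_zero_left hP
end

section
/- Let A be a real n×n Hurwitz matrix, B a real n×m matrix, C a real m×n matrix, and G(s) := C (sI − A)⁻¹ B. Let λ₁, …, λ_r be distinct complex numbers with Re λ_i < 0, λ_j + λ_k ≠ 0 for all j, k, and l_i, r_i ∈ ℂ^m. Define F̂(l₁,…,l_r, r₁,…,r_r, λ₁,…,λ_r) := −2 Σ_{i=1}^r l_iᵀ G(−λ_i) r_i + Σ_{j=1}^r Σ_{k=1}^r (l_jᵀ l_k)(r_kᵀ r_j)/(−λ_j − λ_k), and H_r(s) := Σ_{k=1}^r l_k r_kᵀ/(s − λ_k). Then F̂, viewed as a function of the single variable r_i ∈ ℂ^m with all other arguments fixed, is differentiable, and its derivative at r_i is the ℂ-linear functional v ↦ 2 l_iᵀ ( H_r(−λ_i) − G(−λ_i) ) v. -/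
open Matrix

/-- Derivative of the pole–residue H2 objective with respect to a right residue
direction: `F̂ = −2 Σᵢ lᵢᵀ G(−λᵢ) rᵢ + Σⱼₖ (lⱼᵀ lₖ)(rₖᵀ rⱼ)/(−λⱼ − λₖ)`, viewed as a
function of `rᵢ` alone, is differentiable at `rᵢ` with derivative the linear
functional `v ↦ 2 lᵢᵀ (H_r(−λᵢ) − G(−λᵢ)) v`. -/
theorem stmt_11 {n m r : ℕ} (A : Matrix (Fin n) (Fin n) ℝ) (hA : IsHurwitz A)
    (B : Matrix (Fin n) (Fin m) ℝ) (C : Matrix (Fin m) (Fin n) ℝ)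
    (G : ℂ → Matrix (Fin m) (Fin m) ℂ)
    (hG : ∀ s : ℂ, s ∉ spectrum ℂ (A.map Complex.ofReal) →
      G s = C.map Complex.ofReal *
        (s • (1 : Matrix (Fin n) (Fin n) ℂ) - A.map Complex.ofReal)⁻¹ *
        B.map Complex.ofReal)
    (lam : Fin r → ℂ)
    (hdist : Function.Injective lam)
    (hstab : ∀ i, (lam i).re < 0)
    (hsum : ∀ j k, lam j + lam k ≠ 0)
    (l ρ : Fin r → (Fin m → ℂ))
    (Hr : ℂ → Matrix (Fin m) (Fin m) ℂ)
    (hHr : ∀ s : ℂ, Hr s = ∑ k : Fin r, (s - lam k)⁻¹ • Matrix.vecMulVec (l k) (ρ k))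
    (i : Fin r) :
    ∃ f' : (Fin m → ℂ) →L[ℂ] ℂ,
      HasFDerivAt (fun v : Fin m → ℂ =>
          -2 * ∑ i' : Fin r,
              l i' ⬝ᵥ (G (-(lam i')) *ᵥ (Function.update ρ i v) i') +
            ∑ j : Fin r, ∑ k : Fin r,
              (l j ⬝ᵥ l k) * ((Function.update ρ i v) k ⬝ᵥ (Function.update ρ i v) j) /
                (-(lam j) - lam k))
        f' (ρ i) ∧
      ∀ v : Fin m → ℂ,
        f' v = 2 * (l i ⬝ᵥ ((Hr (-(lam i)) - G (-(lam i))) *ᵥ v)) := by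
  classical
  have hu : ∀ k : Fin r, ∃ D : (Fin m → ℂ) →L[ℂ] (Fin m → ℂ),
      HasFDerivAt (fun v : Fin m → ℂ => Function.update ρ i v k) D (ρ i) ∧
      ∀ v, D v = if k = i then v else 0 := by
    intro k
    by_cases h : k = i
    · subst h
      refine ⟨ContinuousLinearMap.id ℂ _, ?_, by simp⟩
      simpa using hasFDerivAt_id (𝕜 := ℂ) (ρ k)
    · refine ⟨0, ?_, by simp [h]⟩
      simpa [h] using hasFDerivAt_const (𝕜 := ℂ) (ρ k) (ρ i)
  choose D hD hDv using hu
  have hc : ∀ (k : Fin r) (a : Fin m), HasFDerivAt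
      (fun v : Fin m → ℂ => Function.update ρ i v k a)
      ((ContinuousLinearMap.proj a).comp (D k)) (ρ i) :=
    fun k a => (hasFDerivAt_pi'.1 (hD k)) a
  have h1 : ∀ i' : Fin r, HasFDerivAt
      (fun v : Fin m → ℂ => l i' ⬝ᵥ (G (-(lam i')) *ᵥ (Function.update ρ i v) i')) _ (ρ i) :=
    fun i' => HasFDerivAt.fun_sum (u := Finset.univ) fun a _ =>
      (HasFDerivAt.fun_sum (u := Finset.univ) fun b _ =>
        (hc i' b).const_mul (G (-(lam i')) a b)).const_mul (l i' a)
  have h2 : ∀ j k : Fin r, HasFDerivAt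
      (fun v : Fin m → ℂ => (l j ⬝ᵥ l k) *
        ((Function.update ρ i v) k ⬝ᵥ (Function.update ρ i v) j) / (-(lam j) - lam k)) _ (ρ i) :=
    fun j k => ((HasFDerivAt.fun_sum (u := Finset.univ) fun a _ =>
      (hc k a).mul (hc j a)).const_mul (l j ⬝ᵥ l k)).mul_const ((-(lam j) - lam k)⁻¹)
  refine ⟨_, ((HasFDerivAt.fun_sum (u := Finset.univ) fun i' _ => h1 i').const_mul (-2)).add
    (HasFDerivAt.fun_sum (u := Finset.univ) fun j _ =>
      HasFDerivAt.fun_sum (u := Finset.univ) fun k _ => h2 j k), ?_⟩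
  intro v
  have e1 : ∀ i' : Fin r, (∑ a, l i' a * ∑ b, G (-(lam i')) a b * D i' v b)
      = if i' = i then l i ⬝ᵥ (G (-(lam i)) *ᵥ v) else 0 := by
    intro i'
    rw [hDv]
    split_ifs with h
    · subst h; rfl
    · simp
  have e2 : ∀ j k : Fin r, (-(lam j) - lam k)⁻¹ * ((l j ⬝ᵥ l k) *
      ∑ a, (ρ k a * D j v a + ρ j a * D k v a))
      = (if j = i then (-(lam i) - lam k)⁻¹ * ((l i ⬝ᵥ l k) * (ρ k ⬝ᵥ v)) else 0)
       + (if k = i then (-(lam i) - lam j)⁻¹ * ((l i ⬝ᵥ l j) * (ρ j ⬝ᵥ v)) else 0) := by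
    intro j k
    rw [Finset.sum_add_distrib, mul_add, mul_add, hDv, hDv]
    congr 1
    · split_ifs with h
      · subst h; rfl
      · simp
    · split_ifs with h
      · subst h
        rw [dotProduct_comm (l j), neg_sub_left, neg_sub_left, add_comm (lam k)]; rfl
      · simp
  have e3 : l i ⬝ᵥ (Hr (-(lam i)) *ᵥ v)
      = ∑ k, (-(lam i) - lam k)⁻¹ * ((l i ⬝ᵥ l k) * (ρ k ⬝ᵥ v)) := by
    rw [hHr, Matrix.sum_mulVec, dotProduct_sum]
    refine Finset.sum_congr rfl fun k _ => ?_
    rw [Matrix.smul_mulVec, Matrix.vecMulVec_mulVec]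
    simp [mul_comm]
  rw [Matrix.sub_mulVec, dotProduct_sub, e3]
  have key : -2 * (∑ i', ∑ a, l i' a * ∑ b, G (-(lam i')) a b * D i' v b)
      + ∑ j, ∑ k, (-(lam j) - lam k)⁻¹ * ((l j ⬝ᵥ l k) *
      ∑ a, (ρ k a * D j v a + ρ j a * D k v a)) =
      2 * ((∑ k, (-(lam i) - lam k)⁻¹ * ((l i ⬝ᵥ l k) * (ρ k ⬝ᵥ v)))
        - l i ⬝ᵥ (G (-(lam i)) *ᵥ v)) := by
    simp only [e1, e2]
    simp only [Finset.sum_add_distrib]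
    rw [Finset.sum_comm (f := fun j k => if j = i then _ else _)]
    simp only [Finset.sum_ite_eq', Finset.mem_univ, if_true]
    simp
    ring
  rw [← key]
  simp
end

section
/- Let A be a real n×n Hurwitz matrix, B a real n×m matrix, C a real m×n matrix, and G(s) := C (sI − A)⁻¹ B. Let λ₁, …, λ_r be distinct complex numbers with Re λ_i < 0, λ_j + λ_k ≠ 0 for all j, k, and l_i, r_i ∈ ℂ^m. Define F̂ := −2 Σ_{i=1}^r l_iᵀ G(−λ_i) r_i + Σ_{j=1}^r Σ_{k=1}^r (l_jᵀ l_k)(r_kᵀ r_j)/(−λ_j − λ_k), and H_r(s) := Σ_{k=1}^r l_k r_kᵀ/(s − λ_k). Then F̂, viewed as a function of the single variable l_i ∈ ℂ^m with all other arguments fixed, is differentiable, and its derivative at l_i is the ℂ-linear functional v ↦ 2 r_iᵀ ( H_r(−λ_i) − G(−λ_i) )ᵀ v. -/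
open Matrix

theorem hasFDerivAt_dot_aux {m : ℕ} {x y : (Fin m → ℂ) → (Fin m → ℂ)}
    {x' y' : (Fin m → ℂ) →L[ℂ] (Fin m → ℂ)} {p : Fin m → ℂ}
    (hx : HasFDerivAt x x' p) (hy : HasFDerivAt y y' p) :
    ∃ f' : (Fin m → ℂ) →L[ℂ] ℂ, HasFDerivAt (fun v => x v ⬝ᵥ y v) f' p ∧
      ∀ v, f' v = x p ⬝ᵥ y' v + x' v ⬝ᵥ y p := by
  have hx' := hasFDerivAt_pi'.1 hx
  have hy' := hasFDerivAt_pi'.1 hy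
  refine ⟨_, HasFDerivAt.fun_sum (fun a _ => (hx' a).mul (hy' a)), fun v => ?_⟩
  simp only [dotProduct, ← Finset.sum_add_distrib]
  simp [mul_comm, Finset.sum_add_distrib]

theorem hasFDerivAt_update_aux {m r : ℕ} (l : Fin r → (Fin m → ℂ)) (i j : Fin r)
    (p : Fin m → ℂ) :
    HasFDerivAt (fun v : Fin m → ℂ => Function.update l i v j)
      (if j = i then ContinuousLinearMap.id ℂ (Fin m → ℂ) else 0) p := by
  by_cases h : j = i
  · subst h
    simpa using hasFDerivAt_id (𝕜 := ℂ) p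
  · simpa [h] using hasFDerivAt_const (𝕜 := ℂ) (l j) p

/-- Derivative of the pole–residue H2 objective with respect to a left residue
direction: `F̂ = −2 Σᵢ lᵢᵀ G(−λᵢ) rᵢ + Σⱼₖ (lⱼᵀ lₖ)(rₖᵀ rⱼ)/(−λⱼ − λₖ)`, viewed as a
function of `lᵢ` alone, is differentiable at `lᵢ` with derivative the linear
functional `v ↦ 2 rᵢᵀ (H_r(−λᵢ) − G(−λᵢ))ᵀ v`. -/
theorem stmt_12 {n m r : ℕ} (A : Matrix (Fin n) (Fin n) ℝ) (hA : IsHurwitz A)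
    (B : Matrix (Fin n) (Fin m) ℝ) (C : Matrix (Fin m) (Fin n) ℝ)
    (G : ℂ → Matrix (Fin m) (Fin m) ℂ)
    (hG : ∀ s : ℂ, s ∉ spectrum ℂ (A.map Complex.ofReal) →
      G s = C.map Complex.ofReal *
        (s • (1 : Matrix (Fin n) (Fin n) ℂ) - A.map Complex.ofReal)⁻¹ *
        B.map Complex.ofReal)
    (lam : Fin r → ℂ)
    (hdist : Function.Injective lam)
    (hstab : ∀ i, (lam i).re < 0)
    (hsum : ∀ j k, lam j + lam k ≠ 0)
    (l ρ : Fin r → (Fin m → ℂ))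
    (Hr : ℂ → Matrix (Fin m) (Fin m) ℂ)
    (hHr : ∀ s : ℂ, Hr s = ∑ k : Fin r, (s - lam k)⁻¹ • Matrix.vecMulVec (l k) (ρ k))
    (i : Fin r) :
    ∃ f' : (Fin m → ℂ) →L[ℂ] ℂ,
      HasFDerivAt (fun v : Fin m → ℂ =>
          -2 * ∑ i' : Fin r,
              (Function.update l i v) i' ⬝ᵥ (G (-(lam i')) *ᵥ ρ i') +
            ∑ j : Fin r, ∑ k : Fin r,
              ((Function.update l i v) j ⬝ᵥ (Function.update l i v) k) * (ρ k ⬝ᵥ ρ j) /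
                (-(lam j) - lam k))
        f' (l i) ∧
      ∀ v : Fin m → ℂ,
        f' v = 2 * (ρ i ⬝ᵥ ((Hr (-(lam i)) - G (-(lam i)))ᵀ *ᵥ v)) := by
  have hu := fun j => hasFDerivAt_update_aux l i j (l i)
  choose f1 hf1 hf1' using fun j : Fin r =>
    hasFDerivAt_dot_aux (hu j) (hasFDerivAt_const (𝕜 := ℂ) (G (-(lam j)) *ᵥ ρ j) (l i))
  choose f2 hf2 hf2' using fun j k : Fin r => hasFDerivAt_dot_aux (hu j) (hu k)
  refine ⟨(-2 : ℂ) • ∑ j, f1 j +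
    ∑ j, ∑ k, ((ρ k ⬝ᵥ ρ j) / (-(lam j) - lam k)) • f2 j k, ?_, fun v => ?_⟩
  · refine HasFDerivAt.add ((HasFDerivAt.fun_sum fun j _ => hf1 j).const_mul (-2)) ?_
    refine HasFDerivAt.fun_sum fun j _ => HasFDerivAt.fun_sum fun k _ => ?_
    simpa only [mul_div_assoc] using
      (hf2 j k).mul_const ((ρ k ⬝ᵥ ρ j) / (-(lam j) - lam k))
  · have e1 : ∑ j, f1 j v = v ⬝ᵥ (G (-(lam i)) *ᵥ ρ i) := by
      rw [Finset.sum_eq_single i]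
      · simp [hf1']
      · intro j _ hj
        simp [hf1', hj]
      · simp
    have e2 : ∑ j, ∑ k, ((ρ k ⬝ᵥ ρ j) / (-(lam j) - lam k)) * f2 j k v =
        2 * ∑ k, (ρ i ⬝ᵥ ρ k) / (-(lam i) - lam k) * (l k ⬝ᵥ v) := by
      have hE : ∀ j, (if j = i then ContinuousLinearMap.id ℂ (Fin m → ℂ) else 0) v =
          if j = i then v else 0 := by
        intro j; split_ifs <;> simp
      simp only [hf2', Function.update_eq_self, hE, mul_add, Finset.sum_add_distrib]
      rw [two_mul]
      congr 1
      · refine Finset.sum_congr rfl fun j _ => ?_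
        rw [Finset.sum_eq_single i]
        · rw [if_pos rfl, neg_sub_left, neg_sub_left, add_comm]
        · intro k _ hk
          simp [hk]
        · simp
      · rw [Finset.sum_eq_single i]
        · refine Finset.sum_congr rfl fun k _ => ?_
          rw [if_pos rfl, dotProduct_comm v, dotProduct_comm (ρ k)]
        · intro k _ hk
          simp [hk]
        · simp
    have e3 : ρ i ⬝ᵥ ((Hr (-(lam i)))ᵀ *ᵥ v) =
        ∑ k, (ρ i ⬝ᵥ ρ k) / (-(lam i) - lam k) * (l k ⬝ᵥ v) := by
      rw [hHr, Matrix.transpose_sum, Matrix.sum_mulVec, dotProduct_sum]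
      refine Finset.sum_congr rfl fun k _ => ?_
      rw [Matrix.transpose_smul, Matrix.transpose_vecMulVec, Matrix.smul_mulVec,
        Matrix.vecMulVec_mulVec]
      simp [dotProduct_smul]
      ring
    have e4 : ρ i ⬝ᵥ ((G (-(lam i)))ᵀ *ᵥ v) = v ⬝ᵥ (G (-(lam i)) *ᵥ ρ i) := by
      rw [Matrix.mulVec_transpose, dotProduct_comm, Matrix.dotProduct_mulVec]
    rw [Matrix.transpose_sub, Matrix.sub_mulVec, dotProduct_sub, e3, e4]
    simp only [ContinuousLinearMap.add_apply, ContinuousLinearMap.smul_apply, ContinuousLinearMap.sum_apply, smul_eq_mul, e1, e2]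
    ring
end

section
/- Let A be a real n×n Hurwitz matrix, B a real n×m matrix, C a real m×n matrix, and G(s) := C (sI − A)⁻¹ B, with derivative G'(s) = −C (sI − A)⁻² B. Let λ₁, …, λ_r be distinct complex numbers with Re λ_i < 0, λ_j + λ_k ≠ 0 for all j, k, and l_i, r_i ∈ ℂ^m. Define F̂ := −2 Σ_{i=1}^r l_iᵀ G(−λ_i) r_i + Σ_{j=1}^r Σ_{k=1}^r (l_jᵀ l_k)(r_kᵀ r_j)/(−λ_j − λ_k), H_r(s) := Σ_{k=1}^r l_k r_kᵀ/(s − λ_k), and H_r'(s) := −Σ_{k=1}^r l_k r_kᵀ/(s − λ_k)². Then F̂, viewed as a function of the single complex variable λ_i with all other arguments fixed, is differentiable at λ_i, with derivative equal to −2 l_iᵀ ( H_r'(−λ_i) − G'(−λ_i) ) r_i. -/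
open Matrix

section Resolvent

attribute [local instance] Matrix.linftyOpNormedRing Matrix.linftyOpNormedAlgebra

/-- Scalar form of the derivative of the resolvent of a matrix. -/
lemma hasDerivAt_linear_resolvent {n : ℕ} (M : Matrix (Fin n) (Fin n) ℂ)
    (φ : Matrix (Fin n) (Fin n) ℂ →ₗ[ℂ] ℂ) (s : ℂ) (hs : s ∉ spectrum ℂ M) :
    HasDerivAt (fun z : ℂ => φ ((z • (1 : Matrix (Fin n) (Fin n) ℂ) - M)⁻¹))
      (-φ ((s • (1 : Matrix (Fin n) (Fin n) ℂ) - M)⁻¹ *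
        (s • (1 : Matrix (Fin n) (Fin n) ℂ) - M)⁻¹)) s := by
  have h1 : ∀ z : ℂ, (z • (1 : Matrix (Fin n) (Fin n) ℂ) - M)⁻¹ = resolvent M z := by
    intro z
    rw [Matrix.nonsing_inv_eq_ringInverse, resolvent, Algebra.algebraMap_eq_smul_one]
  have h2 : s ∈ resolventSet ℂ M := by
    simpa [spectrum] using hs
  have h3 := spectrum.hasDerivAt_resolvent_const_left h2
  have h4 := (LinearMap.toContinuousLinearMap φ).hasFDerivAt.comp_hasDerivAt s h3
  simp only [h1]
  rw [← map_neg, ← pow_two]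
  exact h4

end Resolvent

/-- The linear functional `M ↦ uᵀ (C M B) v`. -/
lemma exists_linear_functional {n m : ℕ} (B : Matrix (Fin n) (Fin m) ℂ)
    (C : Matrix (Fin m) (Fin n) ℂ) (u v : Fin m → ℂ) :
    ∃ φ : Matrix (Fin n) (Fin n) ℂ →ₗ[ℂ] ℂ, ∀ M, φ M = u ⬝ᵥ ((C * M * B) *ᵥ v) :=
  ⟨{ toFun := fun M => u ⬝ᵥ ((C * M * B) *ᵥ v)
     map_add' := by
      intro x y
      simp [Matrix.mul_add, Matrix.add_mul, Matrix.add_mulVec]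
     map_smul' := by
      intro c x
      simp [Matrix.smul_mulVec] }, fun _ => rfl⟩

/-- Derivative of the pole–residue H2 objective with respect to a pole:
`F̂ = −2 Σᵢ lᵢᵀ G(−λᵢ) rᵢ + Σⱼₖ (lⱼᵀ lₖ)(rₖᵀ rⱼ)/(−λⱼ − λₖ)`, viewed as a function of
the single complex variable `λᵢ`, is differentiable at `λᵢ` with derivative
`−2 lᵢᵀ (H_r'(−λᵢ) − G'(−λᵢ)) rᵢ`, where `G'(s) = −C (sI − A)⁻² B` and
`H_r'(s) = −Σₖ lₖ rₖᵀ/(s − λₖ)²`. -/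
theorem stmt_13 {n m r : ℕ} (A : Matrix (Fin n) (Fin n) ℝ) (hA : IsHurwitz A)
    (B : Matrix (Fin n) (Fin m) ℝ) (C : Matrix (Fin m) (Fin n) ℝ)
    (G G' : ℂ → Matrix (Fin m) (Fin m) ℂ)
    (hG : ∀ s : ℂ, s ∉ spectrum ℂ (A.map Complex.ofReal) →
      G s = C.map Complex.ofReal *
        (s • (1 : Matrix (Fin n) (Fin n) ℂ) - A.map Complex.ofReal)⁻¹ *
        B.map Complex.ofReal)
    (hG' : ∀ s : ℂ, s ∉ spectrum ℂ (A.map Complex.ofReal) →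
      G' s = -(C.map Complex.ofReal *
        ((s • (1 : Matrix (Fin n) (Fin n) ℂ) - A.map Complex.ofReal)⁻¹ *
          (s • (1 : Matrix (Fin n) (Fin n) ℂ) - A.map Complex.ofReal)⁻¹) *
        B.map Complex.ofReal))
    (lam : Fin r → ℂ)
    (hdist : Function.Injective lam)
    (hstab : ∀ i, (lam i).re < 0)
    (hsum : ∀ j k, lam j + lam k ≠ 0)
    (l ρ : Fin r → (Fin m → ℂ))
    (Hr' : ℂ → Matrix (Fin m) (Fin m) ℂ)
    (hHr' : ∀ s : ℂ,
      Hr' s = -∑ k : Fin r, ((s - lam k) ^ 2)⁻¹ • Matrix.vecMulVec (l k) (ρ k))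
    (i : Fin r) :
    HasDerivAt (fun z : ℂ =>
        -2 * ∑ i' : Fin r,
            l i' ⬝ᵥ (G (-(Function.update lam i z i')) *ᵥ ρ i') +
          ∑ j : Fin r, ∑ k : Fin r,
            (l j ⬝ᵥ l k) * (ρ k ⬝ᵥ ρ j) /
              (-(Function.update lam i z j) - Function.update lam i z k))
      (-2 * (l i ⬝ᵥ ((Hr' (-(lam i)) - G' (-(lam i))) *ᵥ ρ i)))
      (lam i) := by
  have hmem : ∀ s : ℂ, 0 < s.re → s ∉ spectrum ℂ (A.map Complex.ofReal) := by
    intro s hs h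
    exact absurd (hA s h) (not_lt.mpr hs.le)
  have hupd : ∀ j, HasDerivAt (fun z : ℂ => Function.update lam i z j)
      (if j = i then 1 else 0) (lam i) := by
    intro j
    by_cases hj : j = i
    · subst hj
      simpa using hasDerivAt_id' (lam j)
    · simpa [hj] using hasDerivAt_const (lam i) (lam j)
  have hGd : ∀ j, HasDerivAt (fun z : ℂ => l j ⬝ᵥ (G (-(Function.update lam i z j)) *ᵥ ρ j))
      (-(l j ⬝ᵥ (G' (-(lam j)) *ᵥ ρ j)) * (if j = i then 1 else 0)) (lam i) := by
    intro j
    by_cases hj : j = i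
    · subst hj
      have hre : 0 < (-(lam j)).re := by simpa using hstab j
      obtain ⟨φ, hφ⟩ := exists_linear_functional (B.map Complex.ofReal)
        (C.map Complex.ofReal) (l j) (ρ j)
      have h1 := hasDerivAt_linear_resolvent (A.map Complex.ofReal) φ _ (hmem _ hre)
      have h2 := h1.comp (lam j) (hasDerivAt_neg (lam j))
      have h3 : -(l j ⬝ᵥ (G' (-(lam j)) *ᵥ ρ j)) * (if j = j then 1 else 0) =
          -φ ((-(lam j) • (1 : Matrix (Fin n) (Fin n) ℂ) - A.map Complex.ofReal)⁻¹ *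
        (-(lam j) • (1 : Matrix (Fin n) (Fin n) ℂ) - A.map Complex.ofReal)⁻¹) * -1 := by
        rw [hφ, hG' _ (hmem _ hre)]
        simp [Matrix.neg_mulVec]
      rw [h3]
      refine h2.congr_of_eventuallyEq ?_
      have hopen : ∀ᶠ z : ℂ in nhds (lam j), z.re < 0 :=
        (isOpen_lt Complex.continuous_re continuous_const).mem_nhds (hstab j)
      filter_upwards [hopen] with z hz
      have hz' : 0 < (-z).re := by simpa using hz
      simp only [Function.update_self, Function.comp_apply]
      rw [hφ, hG _ (hmem _ hz')]
    · simpa [hj] using hasDerivAt_const (lam i) (l j ⬝ᵥ (G (-(lam j)) *ᵥ ρ j))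
  have hq : ∀ j k, HasDerivAt (fun z : ℂ => (l j ⬝ᵥ l k) * (ρ k ⬝ᵥ ρ j) /
        (-(Function.update lam i z j) - Function.update lam i z k))
      ((l j ⬝ᵥ l k) * (ρ k ⬝ᵥ ρ j) * ((lam j + lam k) ^ 2)⁻¹ *
        ((if j = i then 1 else 0) + (if k = i then 1 else 0))) (lam i) := by
    intro j k
    have hne : -lam j - lam k ≠ 0 := by
      intro h
      apply hsum j k
      linear_combination -h
    have h := (hasDerivAt_const (lam i) ((l j ⬝ᵥ l k) * (ρ k ⬝ᵥ ρ j))).fun_div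
      ((hupd j).fun_neg.fun_sub (hupd k)) (by simpa using hne)
    refine h.congr_deriv ?_
    simp only [Function.update_eq_self]
    rw [show (-lam j - lam k) ^ 2 = (lam j + lam k) ^ 2 by ring, div_eq_mul_inv]
    ring
  have key := ((HasDerivAt.fun_sum (u := Finset.univ) fun j _ => hGd j).const_mul (-2)).fun_add
    (HasDerivAt.fun_sum (u := Finset.univ) fun j _ =>
      HasDerivAt.fun_sum (u := Finset.univ) fun k _ => hq j k)
  refine key.congr_deriv ?_
  have hH : l i ⬝ᵥ (Hr' (-(lam i)) *ᵥ ρ i) =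
      -∑ k, (l i ⬝ᵥ l k) * (ρ k ⬝ᵥ ρ i) * ((lam i + lam k) ^ 2)⁻¹ := by
    rw [hHr', Matrix.neg_mulVec, dotProduct_neg, Matrix.sum_mulVec, dotProduct_sum]
    congr 1
    refine Finset.sum_congr rfl fun k _ => ?_
    rw [Matrix.smul_mulVec, dotProduct_smul, Matrix.vecMulVec_mulVec,
      show (-lam i - lam k) ^ 2 = (lam i + lam k) ^ 2 by ring]
    simp
    ring
  have hS : ∑ j, ∑ k, (l j ⬝ᵥ l k) * (ρ k ⬝ᵥ ρ j) * ((lam j + lam k) ^ 2)⁻¹ *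
        ((if j = i then 1 else 0) + (if k = i then 1 else 0)) =
      2 * ∑ k, (l i ⬝ᵥ l k) * (ρ k ⬝ᵥ ρ i) * ((lam i + lam k) ^ 2)⁻¹ := by
    simp only [mul_add, Finset.sum_add_distrib, mul_ite, mul_one, mul_zero,
      Finset.sum_ite_eq', Finset.mem_univ, if_true]
    rw [Finset.sum_comm]
    simp only [Finset.sum_ite_eq', Finset.mem_univ, if_true]
    rw [two_mul]
    congr 1
    refine Finset.sum_congr rfl fun k _ => ?_
    rw [dotProduct_comm (l k), dotProduct_comm (ρ i), add_comm (lam k)]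
  rw [hS, Matrix.sub_mulVec, dotProduct_sub, hH]
  simp only [mul_ite, mul_one, mul_zero, Finset.sum_ite_eq', Finset.mem_univ, if_true]
  ring
end
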